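/- Let (H, α_H) be a Hom-bialgebra over a field k, let (A, α_A) be a right H-comodule algebra (with coaction written a ↦ a₍₀₎⊗a₍₁₎), let (C, α_C) be a right H-module coalgebra (with action written c⊗h ↦ c·h), and let m ∈ ℤ. Then the linear map Φ : C⊗A → A⊗C defined by Φ(c⊗a) = α_A^{-1}(a₍₀₎) ⊗ α_C^{-1}(c)·α_H^{m}(a₍₁₎) is a Hom-entwining map, i.e. (C,A,Φ) is a Hom-entwining structure (with C playing the role of the Hom-coalgebra). -/

import Mathlib

open TensorProduct BigOperators

noncomputable section

variable (k : Type*) [Field k]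

section HomDefs

variable {A B C H U X Y Z : Type*}
variable [AddCommGroup A] [Module k A] [AddCommGroup B] [Module k B]
variable [AddCommGroup C] [Module k C] [AddCommGroup H] [Module k H]
variable [AddCommGroup U] [Module k U] [AddCommGroup X] [Module k X]
variable [AddCommGroup Y] [Module k Y] [AddCommGroup Z] [Module k Z]

/-- A Hom-algebra `(A, α, μ, e)` over `k`. -/
def IsHomAlgebra (α : A ≃ₗ[k] A) (μ : A →ₗ[k] A →ₗ[k] A) (e : A) : Prop :=
  (∀ a b, α (μ a b) = μ (α a) (α b)) ∧
  (∀ a b c, μ (α a) (μ b c) = μ (μ a b) (α c)) ∧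
  α e = e ∧ (∀ a, μ e a = α a) ∧ (∀ a, μ a e = α a)

/-- A Hom-coalgebra `(C, α, Δ, ε)` over `k`. -/
def IsHomCoalgebra (α : C ≃ₗ[k] C) (Δ : C →ₗ[k] C ⊗[k] C) (ε : C →ₗ[k] k) : Prop :=
  (∀ c, Δ (α c) = TensorProduct.map α.toLinearMap α.toLinearMap (Δ c)) ∧
  (∀ c, ε (α c) = ε c) ∧
  (∀ c, TensorProduct.map α.toLinearMap Δ (Δ c)
      = TensorProduct.assoc k C C C (TensorProduct.map Δ α.toLinearMap (Δ c))) ∧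
  (∀ c, TensorProduct.lid k C (TensorProduct.map ε (LinearMap.id : C →ₗ[k] C) (Δ c)) = α c) ∧
  (∀ c, TensorProduct.rid k C (TensorProduct.map (LinearMap.id : C →ₗ[k] C) ε (Δ c)) = α c)

/-- A Hom-bialgebra `(H, α, μ, e, Δ, ε)` over `k`. -/
def IsHomBialgebra (α : H ≃ₗ[k] H) (μ : H →ₗ[k] H →ₗ[k] H) (e : H)
    (Δ : H →ₗ[k] H ⊗[k] H) (ε : H →ₗ[k] k) : Prop :=
  IsHomAlgebra k α μ e ∧ IsHomCoalgebra k α Δ ε ∧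
  (∀ a b, Δ (μ a b) = TensorProduct.map (TensorProduct.lift μ) (TensorProduct.lift μ)
      (TensorProduct.tensorTensorTensorComm k H H H H (Δ a ⊗ₜ[k] Δ b))) ∧
  Δ e = e ⊗ₜ[k] e ∧
  (∀ a b, ε (μ a b) = ε a * ε b) ∧
  ε e = 1

/-- A right `A`-Hom-module `(U, αU, act)`. -/
def IsHomModule (αA : A ≃ₗ[k] A) (μ : A →ₗ[k] A →ₗ[k] A) (e : A)
    (αU : U ≃ₗ[k] U) (act : U →ₗ[k] A →ₗ[k] U) : Prop :=
  (∀ u a, αU (act u a) = act (αU u) (αA a)) ∧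
  (∀ u, act u e = αU u) ∧
  (∀ u a b, act (act u a) (αA b) = act (αU u) (μ a b))

/-- A right `H`-Hom-comodule `(U, αU, ρ)`. -/
def IsHomComodule (αH : H ≃ₗ[k] H) (Δ : H →ₗ[k] H ⊗[k] H) (ε : H →ₗ[k] k)
    (αU : U ≃ₗ[k] U) (ρ : U →ₗ[k] U ⊗[k] H) : Prop :=
  (∀ u, ρ (αU u) = TensorProduct.map αU.toLinearMap αH.toLinearMap (ρ u)) ∧
  (∀ u, TensorProduct.map αU.toLinearMap Δ (ρ u)
      = TensorProduct.assoc k U H H (TensorProduct.map ρ αH.toLinearMap (ρ u))) ∧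
  (∀ u, TensorProduct.rid k U (TensorProduct.map (LinearMap.id : U →ₗ[k] U) ε (ρ u)) = αU u)

/-- A Hom-cotwistor `φ : B ⊗ H → H ⊗ B` between Hom-coalgebras `B` and `H`
(conditions (M1)-(M4) together with compatibility with the structure maps). -/
def IsHomCotwistor (αB : B ≃ₗ[k] B) (ΔB : B →ₗ[k] B ⊗[k] B) (εB : B →ₗ[k] k)
    (αH : H ≃ₗ[k] H) (ΔH : H →ₗ[k] H ⊗[k] H) (εH : H →ₗ[k] k)
    (φ : B ⊗[k] H →ₗ[k] H ⊗[k] B) : Prop :=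
  (φ ∘ₗ TensorProduct.map αB.toLinearMap αH.toLinearMap
     = TensorProduct.map αH.toLinearMap αB.toLinearMap ∘ₗ φ) ∧
  -- (M1)
  (TensorProduct.map αH.toLinearMap ΔB ∘ₗ φ
     = (TensorProduct.assoc k H B B).toLinearMap
       ∘ₗ TensorProduct.map φ (LinearMap.id : B →ₗ[k] B)
       ∘ₗ (TensorProduct.assoc k B H B).symm.toLinearMap
       ∘ₗ TensorProduct.map (LinearMap.id : B →ₗ[k] B) φ
       ∘ₗ (TensorProduct.assoc k B B H).toLinearMap
       ∘ₗ TensorProduct.map ΔB αH.toLinearMap) ∧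
  -- (M2)
  (TensorProduct.map ΔH αB.toLinearMap ∘ₗ φ
     = (TensorProduct.assoc k H H B).symm.toLinearMap
       ∘ₗ TensorProduct.map (LinearMap.id : H →ₗ[k] H) φ
       ∘ₗ (TensorProduct.assoc k H B H).toLinearMap
       ∘ₗ TensorProduct.map φ (LinearMap.id : H →ₗ[k] H)
       ∘ₗ (TensorProduct.assoc k B H H).symm.toLinearMap
       ∘ₗ TensorProduct.map αB.toLinearMap ΔH) ∧
  -- (M3)
  ((TensorProduct.lid k B).toLinearMap
      ∘ₗ TensorProduct.map εH (LinearMap.id : B →ₗ[k] B) ∘ₗ φ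
     = (TensorProduct.rid k B).toLinearMap
        ∘ₗ TensorProduct.map (LinearMap.id : B →ₗ[k] B) εH) ∧
  -- (M4)
  ((TensorProduct.rid k H).toLinearMap
      ∘ₗ TensorProduct.map (LinearMap.id : H →ₗ[k] H) εB ∘ₗ φ
     = (TensorProduct.lid k H).toLinearMap
        ∘ₗ TensorProduct.map εB (LinearMap.id : H →ₗ[k] H))

/-- A monoidal Hom-cotwistor between Hom-bialgebras `B` and `H`:
a Hom-cotwistor additionally satisfying (M5) and (M6). -/
def IsMonoidalHomCotwistor (αB : B ≃ₗ[k] B) (μB : B →ₗ[k] B →ₗ[k] B) (eB : B)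
    (ΔB : B →ₗ[k] B ⊗[k] B) (εB : B →ₗ[k] k)
    (αH : H ≃ₗ[k] H) (μH : H →ₗ[k] H →ₗ[k] H) (eH : H)
    (ΔH : H →ₗ[k] H ⊗[k] H) (εH : H →ₗ[k] k)
    (φ : B ⊗[k] H →ₗ[k] H ⊗[k] B) : Prop :=
  IsHomCotwistor k αB ΔB εB αH ΔH εH φ ∧
  -- (M5)
  (TensorProduct.map (TensorProduct.lift μH) (TensorProduct.lift μB)
      ∘ₗ (TensorProduct.tensorTensorTensorComm k H B H B).toLinearMap
      ∘ₗ TensorProduct.map φ φ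
    = φ ∘ₗ TensorProduct.map (TensorProduct.lift μB) (TensorProduct.lift μH)
        ∘ₗ (TensorProduct.tensorTensorTensorComm k B H B H).toLinearMap) ∧
  -- (M6)
  φ (eB ⊗ₜ[k] eH) = eH ⊗ₜ[k] eB

/-- A Hom-entwining map `Φ : H ⊗ A → A ⊗ H` (conditions (E1)-(E4) together
with compatibility with the structure maps); `(H, A, Φ)` is then a
Hom-entwining structure. -/
def IsHomEntwining (αA : A ≃ₗ[k] A) (μ : A →ₗ[k] A →ₗ[k] A) (e : A)
    (αH : H ≃ₗ[k] H) (Δ : H →ₗ[k] H ⊗[k] H) (ε : H →ₗ[k] k)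
    (Φ : H ⊗[k] A →ₗ[k] A ⊗[k] H) : Prop :=
  (TensorProduct.map αA.toLinearMap αH.toLinearMap ∘ₗ Φ
     = Φ ∘ₗ TensorProduct.map αH.toLinearMap αA.toLinearMap) ∧
  -- (E1)
  (TensorProduct.map (TensorProduct.lift μ) αH.toLinearMap
      ∘ₗ (TensorProduct.assoc k A A H).symm.toLinearMap
      ∘ₗ TensorProduct.map (LinearMap.id : A →ₗ[k] A) Φ
      ∘ₗ (TensorProduct.assoc k A H A).toLinearMap
      ∘ₗ TensorProduct.map Φ (LinearMap.id : A →ₗ[k] A)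
    = Φ ∘ₗ TensorProduct.map αH.toLinearMap (TensorProduct.lift μ)
        ∘ₗ (TensorProduct.assoc k H A A).toLinearMap) ∧
  -- (E2)
  (TensorProduct.map αA.toLinearMap Δ ∘ₗ Φ
     = (TensorProduct.assoc k A H H).toLinearMap
       ∘ₗ TensorProduct.map Φ (LinearMap.id : H →ₗ[k] H)
       ∘ₗ (TensorProduct.assoc k H A H).symm.toLinearMap
       ∘ₗ TensorProduct.map (LinearMap.id : H →ₗ[k] H) Φ
       ∘ₗ (TensorProduct.assoc k H H A).toLinearMap
       ∘ₗ TensorProduct.map Δ αA.toLinearMap) ∧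
  -- (E3)
  ((TensorProduct.rid k A).toLinearMap
      ∘ₗ TensorProduct.map (LinearMap.id : A →ₗ[k] A) ε ∘ₗ Φ
     = (TensorProduct.lid k A).toLinearMap
        ∘ₗ TensorProduct.map ε (LinearMap.id : A →ₗ[k] A)) ∧
  -- (E4)
  (∀ h, Φ (h ⊗ₜ[k] e) = e ⊗ₜ[k] h)

/-- A Hom-monoidal entwining datum between Hom-bialgebras `H` (coalgebra side)
and `A` (algebra side): a Hom-entwining map additionally satisfying (E5), (E6). -/
def IsHomMonoidalEntwining (αA : A ≃ₗ[k] A) (μA : A →ₗ[k] A →ₗ[k] A) (eA : A)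
    (ΔA : A →ₗ[k] A ⊗[k] A) (εA : A →ₗ[k] k)
    (αH : H ≃ₗ[k] H) (μH : H →ₗ[k] H →ₗ[k] H) (eH : H)
    (ΔH : H →ₗ[k] H ⊗[k] H) (εH : H →ₗ[k] k)
    (Φ : H ⊗[k] A →ₗ[k] A ⊗[k] H) : Prop :=
  IsHomEntwining k αA μA eA αH ΔH εH Φ ∧
  -- (E5)
  (TensorProduct.map (LinearMap.id : A ⊗[k] A →ₗ[k] A ⊗[k] A) (TensorProduct.lift μH)
      ∘ₗ (TensorProduct.tensorTensorTensorComm k A H A H).toLinearMap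
      ∘ₗ TensorProduct.map Φ Φ
      ∘ₗ (TensorProduct.tensorTensorTensorComm k H H A A).toLinearMap
      ∘ₗ TensorProduct.map
           (TensorProduct.map (αH.toLinearMap ∘ₗ αH.toLinearMap)
             (αH.toLinearMap ∘ₗ αH.toLinearMap)) ΔA
    = TensorProduct.map ΔA (αH.toLinearMap ∘ₗ αH.toLinearMap)
        ∘ₗ Φ ∘ₗ TensorProduct.map (TensorProduct.lift μH) (LinearMap.id : A →ₗ[k] A)) ∧
  -- (E6)
  (∀ a, TensorProduct.lid k H
      (TensorProduct.map εA (LinearMap.id : H →ₗ[k] H) (Φ (eH ⊗ₜ[k] a))) = εA a • eH)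

/-- An `n`-th Hom-entwined module over a Hom-entwining structure `(H, A, Φ)`. -/
def IsHomEntwinedModule (αA : A ≃ₗ[k] A) (μ : A →ₗ[k] A →ₗ[k] A) (e : A)
    (αH : H ≃ₗ[k] H) (Δ : H →ₗ[k] H ⊗[k] H) (ε : H →ₗ[k] k)
    (Φ : H ⊗[k] A →ₗ[k] A ⊗[k] H) (n : ℤ)
    (αU : U ≃ₗ[k] U) (act : U →ₗ[k] A →ₗ[k] U) (ρ : U →ₗ[k] U ⊗[k] H) : Prop :=
  IsHomModule k αA μ e αU act ∧
  IsHomComodule k αH Δ ε αU ρ ∧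
  ∀ u a, ρ (act u a)
    = TensorProduct.map
        (TensorProduct.lift act ∘ₗ
          TensorProduct.map (LinearMap.id : U →ₗ[k] U) αA.toLinearMap)
        ((αH ^ (-n)).toLinearMap)
        ((TensorProduct.assoc k U A H).symm
          (TensorProduct.map (LinearMap.id : U →ₗ[k] U)
            (Φ ∘ₗ TensorProduct.map ((αH ^ (n + 1)).toLinearMap)
               (LinearMap.id : A →ₗ[k] A))
            (TensorProduct.assoc k U H A (ρ u ⊗ₜ[k] a))))

/-- A Hom-Long dimodule over a Hom-bialgebra `H`. -/
def IsHomLongDimodule (αH : H ≃ₗ[k] H) (μ : H →ₗ[k] H →ₗ[k] H) (e : H)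
    (Δ : H →ₗ[k] H ⊗[k] H) (ε : H →ₗ[k] k)
    (αU : U ≃ₗ[k] U) (act : U →ₗ[k] H →ₗ[k] U) (ρ : U →ₗ[k] U ⊗[k] H) : Prop :=
  IsHomModule k αH μ e αU act ∧
  IsHomComodule k αH Δ ε αU ρ ∧
  ∀ u h, ρ (act u h)
    = TensorProduct.map (TensorProduct.lift act) αH.toLinearMap
        ((TensorProduct.assoc k U H H).symm
          (TensorProduct.map (LinearMap.id : U →ₗ[k] U)
            (TensorProduct.comm k H H).toLinearMap
            (TensorProduct.assoc k U H H (ρ u ⊗ₜ[k] αH h))))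

/-- A right `H`-comodule algebra over a Hom-bialgebra `H`. -/
def IsHomComoduleAlgebra (αH : H ≃ₗ[k] H) (μH : H →ₗ[k] H →ₗ[k] H) (eH : H)
    (ΔH : H →ₗ[k] H ⊗[k] H) (εH : H →ₗ[k] k)
    (αA : A ≃ₗ[k] A) (μA : A →ₗ[k] A →ₗ[k] A) (eA : A)
    (ρA : A →ₗ[k] A ⊗[k] H) : Prop :=
  IsHomAlgebra k αA μA eA ∧
  IsHomComodule k αH ΔH εH αA ρA ∧
  (∀ a b, ρA (μA a b) = TensorProduct.map (TensorProduct.lift μA) (TensorProduct.lift μH)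
      (TensorProduct.tensorTensorTensorComm k A H A H (ρA a ⊗ₜ[k] ρA b))) ∧
  ρA eA = eA ⊗ₜ[k] eH

/-- A right `H`-module coalgebra over a Hom-bialgebra `H`. -/
def IsHomModuleCoalgebra (αH : H ≃ₗ[k] H) (μH : H →ₗ[k] H →ₗ[k] H) (eH : H)
    (ΔH : H →ₗ[k] H ⊗[k] H) (εH : H →ₗ[k] k)
    (αC : C ≃ₗ[k] C) (ΔC : C →ₗ[k] C ⊗[k] C) (εC : C →ₗ[k] k)
    (act : C →ₗ[k] H →ₗ[k] C) : Prop :=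
  IsHomCoalgebra k αC ΔC εC ∧
  IsHomModule k αH μH eH αC act ∧
  (∀ c h, ΔC (act c h) = TensorProduct.map (TensorProduct.lift act) (TensorProduct.lift act)
      (TensorProduct.tensorTensorTensorComm k C C H H (ΔC c ⊗ₜ[k] ΔH h))) ∧
  (∀ c h, εC (act c h) = εC c * εH h)

/-- A Hom-Hopf algebra `(H, α, μ, e, Δ, ε, S)` over `k`. -/
def IsHomHopf (αH : H ≃ₗ[k] H) (μ : H →ₗ[k] H →ₗ[k] H) (e : H)
    (Δ : H →ₗ[k] H ⊗[k] H) (ε : H →ₗ[k] k) (S : H →ₗ[k] H) : Prop :=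
  IsHomBialgebra k αH μ e Δ ε ∧
  (∀ h, S (αH h) = αH (S h)) ∧
  (∀ h, TensorProduct.lift μ
      (TensorProduct.map S (LinearMap.id : H →ₗ[k] H) (Δ h)) = ε h • e) ∧
  (∀ h, TensorProduct.lift μ
      (TensorProduct.map (LinearMap.id : H →ₗ[k] H) S (Δ h)) = ε h • e)

/-- A `p`-th right-right Yetter-Drinfeld module over a Hom-Hopf algebra `H`. -/
def IsYetterDrinfeld (αH : H ≃ₗ[k] H) (μ : H →ₗ[k] H →ₗ[k] H) (e : H)
    (Δ : H →ₗ[k] H ⊗[k] H) (ε : H →ₗ[k] k) (S : H →ₗ[k] H) (p : ℤ)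
    (αU : U ≃ₗ[k] U) (act : U →ₗ[k] H →ₗ[k] U) (ρ : U →ₗ[k] U ⊗[k] H) : Prop :=
  IsHomModule k αH μ e αU act ∧
  IsHomComodule k αH Δ ε αU ρ ∧
  ∀ u h, ρ (act u h)
    = TensorProduct.map
        (TensorProduct.lift act ∘ₗ
          TensorProduct.map (LinearMap.id : U →ₗ[k] U) αH.symm.toLinearMap)
        (TensorProduct.lift μ ∘ₗ
          TensorProduct.map (S ∘ₗ (αH ^ (p - 2)).toLinearMap)
            (TensorProduct.lift μ ∘ₗ
              TensorProduct.map αH.symm.toLinearMap ((αH ^ (p - 4)).toLinearMap)))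
        (TensorProduct.tensorTensorTensorComm k U H H (H ⊗[k] H)
          (TensorProduct.map (LinearMap.id : U ⊗[k] H →ₗ[k] U ⊗[k] H)
            (TensorProduct.leftComm k H H H).toLinearMap
            (TensorProduct.tensorTensorTensorComm k U H H (H ⊗[k] H)
              (ρ u ⊗ₜ[k]
                TensorProduct.map (LinearMap.id : H →ₗ[k] H) Δ (Δ h)))))

/-- The smash coproduct comultiplication on `B ⊗ H` induced by
`φ : B ⊗ H → H ⊗ B`: `Δ(b ⊗ h) = (b₁ ⊗ (h₁)^φ) ⊗ ((b₂)^φ ⊗ h₂)`. -/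
def smashComul (φ : B ⊗[k] H →ₗ[k] H ⊗[k] B) (ΔB : B →ₗ[k] B ⊗[k] B)
    (ΔH : H →ₗ[k] H ⊗[k] H) : B ⊗[k] H →ₗ[k] (B ⊗[k] H) ⊗[k] (B ⊗[k] H) :=
  (TensorProduct.assoc k B H (B ⊗[k] H)).symm.toLinearMap
  ∘ₗ TensorProduct.map (LinearMap.id : B →ₗ[k] B)
       (TensorProduct.assoc k H B H).toLinearMap
  ∘ₗ TensorProduct.map (LinearMap.id : B →ₗ[k] B)
       (TensorProduct.map φ (LinearMap.id : H →ₗ[k] H))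
  ∘ₗ TensorProduct.map (LinearMap.id : B →ₗ[k] B)
       (TensorProduct.assoc k B H H).symm.toLinearMap
  ∘ₗ (TensorProduct.assoc k B B (H ⊗[k] H)).toLinearMap
  ∘ₗ TensorProduct.map ΔB ΔH

/-- The smash coproduct counit on `B ⊗ H`: `ε(b ⊗ h) = εB(b) εH(h)`. -/
def smashCounit (εB : B →ₗ[k] k) (εH : H →ₗ[k] k) : B ⊗[k] H →ₗ[k] k :=
  (TensorProduct.lid k k).toLinearMap ∘ₗ TensorProduct.map εB εH

/-- The componentwise product on `B ⊗ H`: `(a ⊗ h)(b ⊗ g) = ab ⊗ hg`. -/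
def smashMul (μB : B →ₗ[k] B →ₗ[k] B) (μH : H →ₗ[k] H →ₗ[k] H) :
    B ⊗[k] H →ₗ[k] B ⊗[k] H →ₗ[k] B ⊗[k] H :=
  (TensorProduct.mk k (B ⊗[k] H) (B ⊗[k] H)).compr₂
    (TensorProduct.map (TensorProduct.lift μB) (TensorProduct.lift μH)
      ∘ₗ (TensorProduct.tensorTensorTensorComm k B H B H).toLinearMap)

/-- Threefold "componentwise comultiplication" `(C⊗C)⊗C → ((C⊗C)⊗C) ⊗ ((C⊗C)⊗C)`
obtained by applying `Δ2` to each factor and pairing the first and second legs. -/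
def convDelta3 (Δ2 : C →ₗ[k] C ⊗[k] C) :
    (C ⊗[k] C) ⊗[k] C →ₗ[k] ((C ⊗[k] C) ⊗[k] C) ⊗[k] ((C ⊗[k] C) ⊗[k] C) :=
  (TensorProduct.tensorTensorTensorComm k (C ⊗[k] C) (C ⊗[k] C) C C).toLinearMap
  ∘ₗ TensorProduct.map (TensorProduct.tensorTensorTensorComm k C C C C).toLinearMap
       (LinearMap.id : C ⊗[k] C →ₗ[k] C ⊗[k] C)
  ∘ₗ TensorProduct.map (TensorProduct.map Δ2 Δ2) Δ2

/-- The map `ξ_{X,Y}(x ⊗ y) = α_X⁻¹(x)·α_H^m(y₍₁₎) ⊗ α_Y⁻¹(y₍₀₎)` for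
Hom-Long dimodules `X`, `Y`. -/
def longXi (m : ℤ) (αH : H ≃ₗ[k] H) (αX : X ≃ₗ[k] X) (αY : Y ≃ₗ[k] Y)
    (act : X →ₗ[k] H →ₗ[k] X) (ρ : Y →ₗ[k] Y ⊗[k] H) : X ⊗[k] Y →ₗ[k] X ⊗[k] Y :=
  TensorProduct.map
      (TensorProduct.lift act ∘ₗ
        TensorProduct.map (LinearMap.id : X →ₗ[k] X) ((αH ^ m).toLinearMap))
      αY.symm.toLinearMap
    ∘ₗ (TensorProduct.assoc k X H Y).symm.toLinearMap
    ∘ₗ TensorProduct.map (LinearMap.id : X →ₗ[k] X) (TensorProduct.comm k Y H).toLinearMap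
    ∘ₗ TensorProduct.map αX.symm.toLinearMap ρ

/-- The associativity constraint `a_{X,Y,Z}((x⊗y)⊗z) = α_X^{i+1}(x) ⊗ (y ⊗ α_Z^{-j-1}(z))`. -/
def homAssoc (i j : ℤ) (αX : X ≃ₗ[k] X) (αZ : Z ≃ₗ[k] Z) :
    (X ⊗[k] Y) ⊗[k] Z ≃ₗ[k] X ⊗[k] (Y ⊗[k] Z) :=
  (TensorProduct.assoc k X Y Z).trans
    (TensorProduct.congr (αX ^ (i + 1))
      (TensorProduct.congr (LinearEquiv.refl k Y) (αZ ^ (-j - 1))))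

/-- The braiding `τ_{X,Y}(x ⊗ y) = α_Y^{j-i-1}(y₍₀₎) ⊗ α_X^{i-j-1}(x)·α_H^{-p}(y₍₁₎)`
for Yetter-Drinfeld modules. -/
def ydTau (p i j : ℤ) (αH : H ≃ₗ[k] H) (αX : X ≃ₗ[k] X) (αY : Y ≃ₗ[k] Y)
    (act : X →ₗ[k] H →ₗ[k] X) (ρ : Y →ₗ[k] Y ⊗[k] H) : X ⊗[k] Y →ₗ[k] Y ⊗[k] X :=
  TensorProduct.map ((αY ^ (j - i - 1)).toLinearMap)
      (TensorProduct.lift act ∘ₗ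
        TensorProduct.map ((αX ^ (i - j - 1)).toLinearMap) ((αH ^ (-p)).toLinearMap))
    ∘ₗ (TensorProduct.leftComm k X Y H).toLinearMap
    ∘ₗ TensorProduct.map (LinearMap.id : X →ₗ[k] X) ρ

end HomDefs

/-!
In Sweedler notation, both sides of (E1) are `α_A⁻¹(a₍₀₎b₍₀₎) ⊗ c·(a₍₁₎b₍₁₎)`: the inner `α_C⁻¹` is
absorbed by Hom-associativity of the action. Both sides of (E2) are
`α_A⁻¹(a₍₀₎₍₀₎) ⊗ α_C⁻¹(c₁)·a₍₀₎₍₁₎ ⊗ α_C⁻¹(c₂)·α_H(a₍₁₎)`, by Hom-coassociativity of the coaction.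
These computations need no twist `α_H ^ m`: since `α_H ^ m` is an endomorphism of the Hom-bialgebra
`H`, the twist amounts to restricting the action on `C` along it.
-/

section TensorMaps

variable {R M N P Q S T : Type*} [CommSemiring R]
variable [AddCommMonoid M] [AddCommMonoid N] [AddCommMonoid P]
variable [AddCommMonoid Q] [AddCommMonoid S] [AddCommMonoid T]
variable [Module R M] [Module R N] [Module R P] [Module R Q] [Module R S] [Module R T]

theorem comul_symm_apply {β : M ≃ₗ[R] N} {ΔM : M →ₗ[R] M ⊗[R] M} {ΔN : N →ₗ[R] N ⊗[R] N}
    (hβ : ∀ x, ΔN (β x) = TensorProduct.map β.toLinearMap β.toLinearMap (ΔM x)) (y : N) :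
    ΔM (β.symm y) = TensorProduct.map β.symm.toLinearMap β.symm.toLinearMap (ΔN y) := by
  obtain ⟨x, rfl⟩ := β.surjective y
  rw [hβ, β.symm_apply_apply]
  exact ((TensorProduct.congr β β).symm_apply_apply (ΔM x)).symm

theorem map_lift_lift_tensorTensorTensorComm_tmul (f : M →ₗ[R] P →ₗ[R] S) (g : N →ₗ[R] Q →ₗ[R] T)
    (x : M ⊗[R] N) (y : P ⊗[R] Q) :
    TensorProduct.map (TensorProduct.lift f) (TensorProduct.lift g)
        (TensorProduct.tensorTensorTensorComm R M N P Q (x ⊗ₜ[R] y))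
      = TensorProduct.map₂ f g x y := by
  induction x with
  | zero => simp
  | add x x' hx hx' => simp only [TensorProduct.add_tmul, map_add, hx, hx', LinearMap.add_apply]
  | tmul m n =>
    induction y with
    | zero => simp
    | add y y' hy hy' => simp only [TensorProduct.tmul_add, map_add, hy, hy']
    | tmul p q => simp

theorem map₂_compl₂_compl₂ {P' Q' : Type*} [AddCommMonoid P'] [AddCommMonoid Q']
    [Module R P'] [Module R Q'] (f : M →ₗ[R] P →ₗ[R] S) (g : N →ₗ[R] Q →ₗ[R] T)
    (β : P' →ₗ[R] P) (γ : Q' →ₗ[R] Q) (x : M ⊗[R] N) :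
    TensorProduct.map₂ (f.compl₂ β) (g.compl₂ γ) x
      = TensorProduct.map₂ f g x ∘ₗ TensorProduct.map β γ := by
  induction x with
  | zero => simp
  | add x x' hx hx' => rw [map_add, map_add, hx, hx', LinearMap.add_comp]
  | tmul m n => ext; simp

theorem map₂_comp_comp {M' N' : Type*} [AddCommMonoid M'] [AddCommMonoid N']
    [Module R M'] [Module R N'] (f : M →ₗ[R] P →ₗ[R] S) (g : N →ₗ[R] Q →ₗ[R] T)
    (β : M' →ₗ[R] M) (γ : N' →ₗ[R] N) :
    TensorProduct.map₂ (f ∘ₗ β) (g ∘ₗ γ)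
      = TensorProduct.map₂ f g ∘ₗ TensorProduct.map β γ := by
  ext; simp

end TensorMaps

section HomBialgebraHom

variable {k}
variable {H L M : Type*} [AddCommGroup H] [Module k H] [AddCommGroup L] [Module k L]
variable [AddCommGroup M] [Module k M]

/-- Morphisms of Hom-bialgebras, along which actions are restricted. The source and target are given
by their structure maps only, so the notion makes sense without the Hom-bialgebra axioms. -/
structure IsHomBialgebraHom
    (αH : H ≃ₗ[k] H) (μH : H →ₗ[k] H →ₗ[k] H) (eH : H) (ΔH : H →ₗ[k] H ⊗[k] H) (εH : H →ₗ[k] k)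
    (αL : L ≃ₗ[k] L) (μL : L →ₗ[k] L →ₗ[k] L) (eL : L) (ΔL : L →ₗ[k] L ⊗[k] L) (εL : L →ₗ[k] k)
    (β : H →ₗ[k] L) : Prop where
  map_structure : ∀ h, β (αH h) = αL (β h)
  map_mul : ∀ h g, β (μH h g) = μL (β h) (β g)
  map_one : β eH = eL
  map_comul : ∀ h, ΔL (β h) = TensorProduct.map β β (ΔH h)
  map_counit : ∀ h, εL (β h) = εH h

variable {αH : H ≃ₗ[k] H} {μH : H →ₗ[k] H →ₗ[k] H} {eH : H}
  {ΔH : H →ₗ[k] H ⊗[k] H} {εH : H →ₗ[k] k}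
variable {αL : L ≃ₗ[k] L} {μL : L →ₗ[k] L →ₗ[k] L} {eL : L}
  {ΔL : L →ₗ[k] L ⊗[k] L} {εL : L →ₗ[k] k}
variable {αM : M ≃ₗ[k] M} {μM : M →ₗ[k] M →ₗ[k] M} {eM : M}
  {ΔM : M →ₗ[k] M ⊗[k] M} {εM : M →ₗ[k] k}

namespace IsHomBialgebraHom

protected theorem id : IsHomBialgebraHom αH μH eH ΔH εH αH μH eH ΔH εH LinearMap.id where
  map_structure _ := rfl
  map_mul _ _ := rfl
  map_one := rfl
  map_comul h := by rw [TensorProduct.map_id]; rfl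
  map_counit _ := rfl

protected theorem comp {γ : L →ₗ[k] M} {β : H →ₗ[k] L}
    (hγ : IsHomBialgebraHom αL μL eL ΔL εL αM μM eM ΔM εM γ)
    (hβ : IsHomBialgebraHom αH μH eH ΔH εH αL μL eL ΔL εL β) :
    IsHomBialgebraHom αH μH eH ΔH εH αM μM eM ΔM εM (γ ∘ₗ β) where
  map_structure h := by simp only [LinearMap.comp_apply, hβ.map_structure, hγ.map_structure]
  map_mul h g := by simp only [LinearMap.comp_apply, hβ.map_mul, hγ.map_mul]
  map_one := by rw [LinearMap.comp_apply, hβ.map_one, hγ.map_one]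
  map_comul h := by
    rw [LinearMap.comp_apply, hγ.map_comul, hβ.map_comul, TensorProduct.map_comp,
      LinearMap.comp_apply]
  map_counit h := by rw [LinearMap.comp_apply, hγ.map_counit, hβ.map_counit]

protected theorem symm {β : H ≃ₗ[k] L}
    (hβ : IsHomBialgebraHom αH μH eH ΔH εH αL μL eL ΔL εL β.toLinearMap) :
    IsHomBialgebraHom αL μL eL ΔL εL αH μH eH ΔH εH β.symm.toLinearMap where
  map_structure x := β.injective <| by simpa using (hβ.map_structure (β.symm x)).symm
  map_mul x y := β.injective <| by simpa using (hβ.map_mul (β.symm x) (β.symm y)).symm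
  map_one := β.injective <| by simpa using hβ.map_one.symm
  map_comul := comul_symm_apply hβ.map_comul
  map_counit x := by simpa using (hβ.map_counit (β.symm x)).symm

end IsHomBialgebraHom

variable (αH μH eH ΔH εH) in
/-- The automorphism group of a Hom-bialgebra, as a subgroup of its linear automorphisms. It
contains the structure map `α_H`, hence every twist `α_H ^ m`. -/
def homBialgebraAut : Subgroup (H ≃ₗ[k] H) where
  carrier := {β | IsHomBialgebraHom αH μH eH ΔH εH αH μH eH ΔH εH β.toLinearMap}
  one_mem' := .id
  mul_mem' hγ hβ := hγ.comp hβ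
  inv_mem' hβ := hβ.symm

theorem IsHomBialgebra.mem_homBialgebraAut (hH : IsHomBialgebra k αH μH eH ΔH εH) :
    αH ∈ homBialgebraAut αH μH eH ΔH εH :=
  let ⟨⟨map_mul, _, map_one, _⟩, ⟨map_comul, map_counit, _⟩, _⟩ := hH
  { map_structure := fun _ ↦ rfl, map_mul, map_one, map_comul, map_counit }

theorem IsHomModuleCoalgebra.restrictScalars
    {C : Type*} [AddCommGroup C] [Module k C] {αC : C ≃ₗ[k] C} {ΔC : C →ₗ[k] C ⊗[k] C}
    {εC : C →ₗ[k] k} {actC : C →ₗ[k] L →ₗ[k] C}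
    (hC : IsHomModuleCoalgebra k αL μL eL ΔL εL αC ΔC εC actC) {β : H →ₗ[k] L}
    (hβ : IsHomBialgebraHom αH μH eH ΔH εH αL μL eL ΔL εL β) :
    IsHomModuleCoalgebra k αH μH eH ΔH εH αC ΔC εC (actC.compl₂ β) := by
  obtain ⟨hcoalg, ⟨hact, hact_one, hact_mul⟩, hact_comul, hact_counit⟩ := hC
  refine ⟨hcoalg, ⟨fun c h ↦ ?_, fun c ↦ ?_, fun c h g ↦ ?_⟩, fun c h ↦ ?_, fun c h ↦ ?_⟩
  · simp only [LinearMap.compl₂_apply, hact, hβ.map_structure]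
  · rw [LinearMap.compl₂_apply, hβ.map_one, hact_one]
  · simp only [LinearMap.compl₂_apply, hβ.map_structure, hact_mul, hβ.map_mul]
  · rw [LinearMap.compl₂_apply, hact_comul, hβ.map_comul,
      map_lift_lift_tensorTensorTensorComm_tmul, map_lift_lift_tensorTensorTensorComm_tmul,
      map₂_compl₂_compl₂, LinearMap.comp_apply]
  · rw [LinearMap.compl₂_apply, hact_counit, hβ.map_counit]

end HomBialgebraHom

section DoiHopf

variable {k}
variable {A C H : Type*} [AddCommGroup A] [Module k A] [AddCommGroup C] [Module k C]
variable [AddCommGroup H] [Module k H]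

/-- The Doi–Hopf map `c ⊗ a ↦ α_A⁻¹(a₍₀₎) ⊗ α_C⁻¹(c)·a₍₁₎` of a coaction `ρA` of `H` on `A` and an
action `actC` of `H` on `C`, without the twist by a power of `α_H`. -/
def doiHopfMap (αA : A ≃ₗ[k] A) (ρA : A →ₗ[k] A ⊗[k] H) (αC : C ≃ₗ[k] C)
    (actC : C →ₗ[k] H →ₗ[k] C) : C ⊗[k] A →ₗ[k] A ⊗[k] C :=
  TensorProduct.map αA.symm.toLinearMap (TensorProduct.lift (actC ∘ₗ αC.symm.toLinearMap))
    ∘ₗ (TensorProduct.leftComm k C A H).toLinearMap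
    ∘ₗ TensorProduct.map (LinearMap.id : C →ₗ[k] C) ρA

variable {αH : H ≃ₗ[k] H} {μH : H →ₗ[k] H →ₗ[k] H} {eH : H}
  {ΔH : H →ₗ[k] H ⊗[k] H} {εH : H →ₗ[k] k}
variable {αA : A ≃ₗ[k] A} {μA : A →ₗ[k] A →ₗ[k] A} {eA : A} {ρA : A →ₗ[k] A ⊗[k] H}
variable {αC : C ≃ₗ[k] C} {ΔC : C →ₗ[k] C ⊗[k] C} {εC : C →ₗ[k] k}
  {actC : C →ₗ[k] H →ₗ[k] C}

theorem doiHopfMap_tmul (c : C) (a : A) :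
    doiHopfMap αA ρA αC actC (c ⊗ₜ[k] a)
      = TensorProduct.map αA.symm.toLinearMap (actC (αC.symm c)) (ρA a) := by
  rw [doiHopfMap, LinearMap.comp_apply, LinearMap.comp_apply, TensorProduct.map_tmul,
    LinearMap.id_apply]
  induction ρA a with
  | zero => simp
  | add s t hs ht => simp only [TensorProduct.tmul_add, map_add, hs, ht]
  | tmul x h => simp

theorem map_doiHopfMap_tmul (hA : IsHomComodule k αH ΔH εH αA ρA)
    (hC : IsHomModule k αH μH eH αC actC) (c : C) (a : A) :
    TensorProduct.map αA.toLinearMap αC.toLinearMap (doiHopfMap αA ρA αC actC (c ⊗ₜ[k] a))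
      = doiHopfMap αA ρA αC actC (αC c ⊗ₜ[k] αA a) := by
  obtain ⟨hρ, -⟩ := hA
  obtain ⟨hact, -⟩ := hC
  rw [doiHopfMap_tmul, doiHopfMap_tmul, hρ]
  induction ρA a with
  | zero => simp
  | add s t hs ht => simp only [map_add, hs, ht]
  | tmul x h => simp [hact]

theorem doiHopfMap_mul (hA : IsHomComoduleAlgebra k αH μH eH ΔH εH αA μA eA ρA)
    (hC : IsHomModule k αH μH eH αC actC) (c : C) (a b : A) :
    TensorProduct.map (TensorProduct.lift μA) αC.toLinearMap
        ((TensorProduct.assoc k A A C).symm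
          (TensorProduct.map (LinearMap.id : A →ₗ[k] A) (doiHopfMap αA ρA αC actC)
            (TensorProduct.assoc k A C A
              (doiHopfMap αA ρA αC actC (c ⊗ₜ[k] a) ⊗ₜ[k] b))))
      = doiHopfMap αA ρA αC actC (αC c ⊗ₜ[k] μA a b) := by
  obtain ⟨⟨hαA_mul, -⟩, -, hρ_mul, -⟩ := hA
  obtain ⟨hact, -, hact_mul⟩ := hC
  have symm_mul (x y : A) : αA.symm (μA x y) = μA (αA.symm x) (αA.symm y) := by
    rw [αA.symm_apply_eq, hαA_mul, αA.apply_symm_apply, αA.apply_symm_apply]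
  have act_mul (h g : H) :
      αC (actC (αC.symm (actC (αC.symm c) h)) g) = actC c (μH h g) := by
    rw [hact, αC.apply_symm_apply, hact_mul, αC.apply_symm_apply]
  rw [doiHopfMap_tmul, doiHopfMap_tmul, hρ_mul, αC.symm_apply_apply]
  induction ρA a with
  | zero => simp
  | add s s' hs hs' => simp only [map_add, TensorProduct.add_tmul, hs, hs']
  | tmul x h =>
    rw [TensorProduct.map_tmul, TensorProduct.assoc_tmul, TensorProduct.map_tmul, doiHopfMap_tmul]
    induction ρA b with
    | zero => simp
    | add t t' ht ht' => simp only [map_add, TensorProduct.tmul_add, ht, ht']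
    | tmul y g => simp [symm_mul, act_mul]

theorem map_comul_doiHopfMap_tmul (hA : IsHomComodule k αH ΔH εH αA ρA)
    (hC : IsHomModuleCoalgebra k αH μH eH ΔH εH αC ΔC εC actC) (c : C) (a : A) :
    TensorProduct.map αA.toLinearMap ΔC (doiHopfMap αA ρA αC actC (c ⊗ₜ[k] a))
      = TensorProduct.map αA.symm.toLinearMap
          (TensorProduct.map₂ (actC ∘ₗ αC.symm.toLinearMap) (actC ∘ₗ αC.symm.toLinearMap) (ΔC c))
          (TensorProduct.assoc k A H H (TensorProduct.map ρA αH.toLinearMap (ρA a))) := by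
  obtain ⟨-, hρ_coassoc, -⟩ := hA
  obtain ⟨⟨hΔC, -⟩, -, hact_comul, -⟩ := hC
  have comul_act (h : H) : ΔC (actC (αC.symm c) h)
      = TensorProduct.map₂ (actC ∘ₗ αC.symm.toLinearMap) (actC ∘ₗ αC.symm.toLinearMap)
          (ΔC c) (ΔH h) := by
    rw [hact_comul, map_lift_lift_tensorTensorTensorComm_tmul, comul_symm_apply hΔC,
      map₂_comp_comp, LinearMap.comp_apply]
  rw [doiHopfMap_tmul, ← hρ_coassoc]
  induction ρA a with
  | zero => simp
  | add s t hs ht => simp only [map_add, hs, ht]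
  | tmul x h => simp [comul_act]

theorem doiHopfMap_doiHopfMap_tmul (hA : IsHomComodule k αH ΔH εH αA ρA) (d : C ⊗[k] C) (a : A) :
    TensorProduct.assoc k A C C
        (TensorProduct.map (doiHopfMap αA ρA αC actC) (LinearMap.id : C →ₗ[k] C)
          ((TensorProduct.assoc k C A C).symm
            (TensorProduct.map (LinearMap.id : C →ₗ[k] C) (doiHopfMap αA ρA αC actC)
              (TensorProduct.assoc k C C A (d ⊗ₜ[k] αA a)))))
      = TensorProduct.map αA.symm.toLinearMap
          (TensorProduct.map₂ (actC ∘ₗ αC.symm.toLinearMap) (actC ∘ₗ αC.symm.toLinearMap) d)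
          (TensorProduct.assoc k A H H (TensorProduct.map ρA αH.toLinearMap (ρA a))) := by
  obtain ⟨hρ, -⟩ := hA
  induction d with
  | zero => simp
  | add d d' hd hd' =>
    simp only [TensorProduct.add_tmul, map_add, TensorProduct.map_add_right, LinearMap.add_apply,
      hd, hd']
  | tmul c₁ c₂ =>
    rw [TensorProduct.assoc_tmul, TensorProduct.map_tmul, doiHopfMap_tmul, hρ]
    induction ρA a with
    | zero => simp
    | add s t hs ht => simp only [map_add, TensorProduct.tmul_add, hs, ht]
    | tmul x h =>
      simp only [TensorProduct.map_tmul, LinearEquiv.coe_coe, αA.symm_apply_apply,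
        TensorProduct.assoc_symm_tmul, doiHopfMap_tmul, LinearMap.id_apply]
      induction ρA x with
      | zero => simp
      | add s t hs ht => simp only [map_add, TensorProduct.add_tmul, hs, ht]
      | tmul y g => simp

theorem doiHopfMap_counit (hA : IsHomComodule k αH ΔH εH αA ρA)
    (hC : IsHomModuleCoalgebra k αH μH eH ΔH εH αC ΔC εC actC) (c : C) (a : A) :
    TensorProduct.rid k A (TensorProduct.map (LinearMap.id : A →ₗ[k] A) εC
        (doiHopfMap αA ρA αC actC (c ⊗ₜ[k] a)))
      = εC c • a := by
  obtain ⟨-, -, hρ_counit⟩ := hA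
  obtain ⟨⟨-, hεC, -⟩, -, -, hact_counit⟩ := hC
  have counit_act (h : H) : εC (actC (αC.symm c) h) = εC c * εH h := by
    rw [hact_counit, ← hεC (αC.symm c), αC.apply_symm_apply]
  suffices ∀ t : A ⊗[k] H, TensorProduct.rid k A (TensorProduct.map LinearMap.id εC
      (TensorProduct.map αA.symm.toLinearMap (actC (αC.symm c)) t))
        = εC c • αA.symm (TensorProduct.rid k A (TensorProduct.map LinearMap.id εH t)) by
    rw [doiHopfMap_tmul, this, hρ_counit, αA.symm_apply_apply]
  intro t
  induction t with
  | zero => simp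
  | add s t hs ht => simp only [map_add, smul_add, hs, ht]
  | tmul x h => simp [counit_act, mul_smul]

theorem doiHopfMap_tmul_one (hA : IsHomComoduleAlgebra k αH μH eH ΔH εH αA μA eA ρA)
    (hC : IsHomModule k αH μH eH αC actC) (c : C) :
    doiHopfMap αA ρA αC actC (c ⊗ₜ[k] eA) = eA ⊗ₜ[k] c := by
  obtain ⟨⟨-, -, hαA_one, -⟩, -, -, hρ_one⟩ := hA
  obtain ⟨-, hact_one, -⟩ := hC
  rw [doiHopfMap_tmul, hρ_one, TensorProduct.map_tmul, hact_one, αC.apply_symm_apply,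
    LinearEquiv.coe_coe, αA.symm_apply_eq.mpr hαA_one.symm]

theorem isHomEntwining_doiHopfMap (hA : IsHomComoduleAlgebra k αH μH eH ΔH εH αA μA eA ρA)
    (hC : IsHomModuleCoalgebra k αH μH eH ΔH εH αC ΔC εC actC) :
    IsHomEntwining k αA μA eA αC ΔC εC (doiHopfMap αA ρA αC actC) := by
  have hρ : IsHomComodule k αH ΔH εH αA ρA := hA.2.1
  have hact : IsHomModule k αH μH eH αC actC := hC.2.1
  refine ⟨?_, ?_, ?_, ?_, doiHopfMap_tmul_one hA hact⟩
  · exact TensorProduct.ext' (map_doiHopfMap_tmul hρ hact)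
  · exact TensorProduct.ext_threefold (doiHopfMap_mul hA hact)
  · exact TensorProduct.ext' fun c a ↦
      (map_comul_doiHopfMap_tmul hρ hC c a).trans (doiHopfMap_doiHopfMap_tmul hρ (ΔC c) a).symm
  · exact TensorProduct.ext' (doiHopfMap_counit hρ hC)

end DoiHopf

theorem doiHopf_homEntwining_general
    {A C H L : Type*} [AddCommGroup A] [Module k A] [AddCommGroup C] [Module k C]
    [AddCommGroup H] [Module k H] [AddCommGroup L] [Module k L]
    {αH : H ≃ₗ[k] H} {μH : H →ₗ[k] H →ₗ[k] H} {eH : H}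
    {ΔH : H →ₗ[k] H ⊗[k] H} {εH : H →ₗ[k] k}
    {αL : L ≃ₗ[k] L} {μL : L →ₗ[k] L →ₗ[k] L} {eL : L}
    {ΔL : L →ₗ[k] L ⊗[k] L} {εL : L →ₗ[k] k}
    {αA : A ≃ₗ[k] A} {μA : A →ₗ[k] A →ₗ[k] A} {eA : A} {ρA : A →ₗ[k] A ⊗[k] H}
    (hA : IsHomComoduleAlgebra k αH μH eH ΔH εH αA μA eA ρA)
    {αC : C ≃ₗ[k] C} {ΔC : C →ₗ[k] C ⊗[k] C} {εC : C →ₗ[k] k} {actC : C →ₗ[k] L →ₗ[k] C}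
    (hC : IsHomModuleCoalgebra k αL μL eL ΔL εL αC ΔC εC actC)
    {β : H →ₗ[k] L} (hβ : IsHomBialgebraHom αH μH eH ΔH εH αL μL eL ΔL εL β) :
    IsHomEntwining k αA μA eA αC ΔC εC
      (TensorProduct.map αA.symm.toLinearMap
          (TensorProduct.lift actC ∘ₗ TensorProduct.map αC.symm.toLinearMap β)
        ∘ₗ (TensorProduct.leftComm k C A H).toLinearMap
        ∘ₗ TensorProduct.map (LinearMap.id : C →ₗ[k] C) ρA) := by
  have lift_comp : TensorProduct.lift actC ∘ₗ TensorProduct.map αC.symm.toLinearMap β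
      = TensorProduct.lift (actC.compl₂ β ∘ₗ αC.symm.toLinearMap) :=
    TensorProduct.ext' fun _ _ ↦ rfl
  rw [lift_comp]
  exact isHomEntwining_doiHopfMap hA (hC.restrictScalars hβ)

/-- for a right `H`-comodule algebra `A` and a right `H`-module
coalgebra `C`, the map `Φ(c ⊗ a) = α_A⁻¹(a₍₀₎) ⊗ α_C⁻¹(c)·α_H^m(a₍₁₎)` is a
Hom-entwining map, i.e. `(C, A, Φ)` is a Hom-entwining structure. -/
theorem doiHopf_homEntwining
    {A C H : Type*} [AddCommGroup A] [Module k A] [AddCommGroup C] [Module k C]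
    [AddCommGroup H] [Module k H]
    (αH : H ≃ₗ[k] H) (μH : H →ₗ[k] H →ₗ[k] H) (eH : H)
    (ΔH : H →ₗ[k] H ⊗[k] H) (εH : H →ₗ[k] k)
    (hH : IsHomBialgebra k αH μH eH ΔH εH)
    (αA : A ≃ₗ[k] A) (μA : A →ₗ[k] A →ₗ[k] A) (eA : A) (ρA : A →ₗ[k] A ⊗[k] H)
    (hA : IsHomComoduleAlgebra k αH μH eH ΔH εH αA μA eA ρA)
    (αC : C ≃ₗ[k] C) (ΔC : C →ₗ[k] C ⊗[k] C) (εC : C →ₗ[k] k)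
    (actC : C →ₗ[k] H →ₗ[k] C)
    (hC : IsHomModuleCoalgebra k αH μH eH ΔH εH αC ΔC εC actC) (m : ℤ) :
    IsHomEntwining k αA μA eA αC ΔC εC
      (TensorProduct.map αA.symm.toLinearMap
          (TensorProduct.lift actC ∘ₗ
            TensorProduct.map αC.symm.toLinearMap ((αH ^ m).toLinearMap))
        ∘ₗ (TensorProduct.leftComm k C A H).toLinearMap
        ∘ₗ TensorProduct.map (LinearMap.id : C →ₗ[k] C) ρA) :=
  doiHopf_homEntwining_general k hA hC (zpow_mem hH.mem_homBialgebraAut m)
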